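/- arXiv:2401.17850 — 3 statements merged into one kernel-verified Lean document; each statement's English description precedes it below -/
import Mathlib

section
/- Let d ≥ 1 and let f ∈ MvPolynomial (Fin 3) ℂ have order ≥ d, and assume the degree-d homogeneous component f_d is squarefree. Let f̃ := Σ_{j≥0} y₁^j · f_{d+j}(1,y₂,y₃) be the strict transform of f. Then the set {(b₂,b₃) ∈ ℂ² : f̃(0,b₂,b₃) = 0 and all three partial derivatives of f̃ vanish at (0,b₂,b₃)} is finite. (Chart form of Lemma 3.4: the strict transform of V(f) has only finitely many singular points on the exceptional divisor.) -/
open MvPolynomial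

/-!
Put `F = f_d` and `g(y₂, y₃) = F(1, y₂, y₃)`. Modulo `y₁` the strict transform is `g`, so its
singular points on `y₁ = 0` are singular points of the affine plane curve `g = 0`. A square factor
of `g` homogenizes to a square factor of `F`, so `g` is squarefree. Over a perfect field a
squarefree polynomial has no nonunit divisor in common with all its partial derivatives, so the
Jacobian ideal of `g` is contained in no proper principal ideal; in a factorial ring this means
that its height is at least `2`. As `K[y₂, y₃]` has dimension `2`, all primes above the Jacobian
ideal are minimal over it, and a Noetherian ring has only finitely many of those.
-/

section PartialDerivatives

variable {σ : Type*}

theorem totalDegree_pderiv_lt {R : Type*} [CommSemiring R] {p : MvPolynomial σ R} {i : σ}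
    (h : pderiv i p ≠ 0) : (pderiv i p).totalDegree < p.totalDegree := by
  obtain ⟨m, hm, hdeg⟩ := Finset.exists_mem_eq_sup _ (support_nonempty.mpr h)
    fun s : σ →₀ ℕ => s.sum fun _ e => e
  have hmem : m + Finsupp.single i 1 ∈ p.support := by
    rw [mem_support_iff, coeff_pderiv] at hm
    exact mem_support_iff.mpr (left_ne_zero_of_mul hm)
  calc (pderiv i p).totalDegree = m.sum fun _ e => e := hdeg
    _ < (m + Finsupp.single i 1).sum fun _ e => e := by
      rw [Finsupp.sum_add_index' (fun _ => rfl) (fun _ _ _ => rfl), Finsupp.sum_single_index rfl]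
      exact Nat.lt_succ_self _
    _ ≤ p.totalDegree := le_totalDegree hmem

theorem pderiv_eq_zero_of_dvd {R : Type*} [CommSemiring R] [NoZeroDivisors R]
    {p : MvPolynomial σ R} {i : σ} (h : p ∣ pderiv i p) : pderiv i p = 0 := by
  by_contra hne
  exact (totalDegree_pderiv_lt hne).not_ge (totalDegree_le_of_dvd_of_isDomain h hne)

theorem natCast_eq_zero_of_pderiv_eq_zero {R : Type*} [CommSemiring R] [NoZeroDivisors R]
    {p : MvPolynomial σ R} {i : σ} (h : pderiv i p = 0) {m : σ →₀ ℕ} (hm : m ∈ p.support) :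
    (m i : R) = 0 := by
  rcases eq_or_ne (m i) 0 with hmi | hmi
  · rw [hmi, Nat.cast_zero]
  have hle : Finsupp.single i 1 ≤ m := by simpa using Nat.one_le_iff_ne_zero.mpr hmi
  have hcoeff := coeff_pderiv (i := i) p (m - Finsupp.single i 1)
  rw [h, coeff_zero, tsub_add_cancel_of_le hle] at hcoeff
  have hcast := (mul_eq_zero.mp hcoeff.symm).resolve_left (mem_support_iff.mp hm)
  rw [← Nat.cast_add_one] at hcast
  simpa [Nat.sub_add_cancel (Nat.one_le_iff_ne_zero.mpr hmi)] using hcast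

theorem exists_pow_eq_of_pderiv_eq_zero {R : Type*} [CommSemiring R] [NoZeroDivisors R] (p : ℕ)
    [Fact p.Prime] [CharP R p] [PerfectRing R p] {f : MvPolynomial σ R}
    (h : ∀ i, pderiv i f = 0) : ∃ g, g ^ p = f := by
  have hdvd : ∀ m ∈ f.support, ∃ k : σ →₀ ℕ, p • k = m := fun m hm => by
    refine ⟨m.mapRange (· / p) (Nat.zero_div p), Finsupp.ext fun i => ?_⟩
    have hpi : p ∣ m i :=
      (CharP.cast_eq_zero_iff R p _).mp (natCast_eq_zero_of_pderiv_eq_zero (h i) hm)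
    simpa using Nat.mul_div_cancel' hpi
  choose! k hk using hdvd
  refine ⟨∑ m ∈ f.support, monomial (k m) ((frobeniusEquiv R p).symm (f.coeff m)), ?_⟩
  calc _ = ∑ m ∈ f.support, monomial m (f.coeff m) := by
        rw [sum_pow_char]
        refine Finset.sum_congr rfl fun m hm => ?_
        rw [monomial_pow, hk m hm, frobeniusEquiv_symm_pow_p]
    _ = f := f.support_sum_monomial_coeff

theorem exists_pderiv_ne_zero_of_irreducible {K : Type*} [Field K] [PerfectField K]
    {q : MvPolynomial σ K} (hq : Irreducible q) : ∃ i, pderiv i q ≠ 0 := by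
  by_contra! hzero
  obtain ⟨p, hp⟩ := ExpChar.exists K
  rcases hp with _ | hprime
  · have hconst : q.totalDegree = 0 := (MvPolynomial.totalDegree_eq_zero_iff _ q).mpr fun m hm i =>
      Nat.cast_eq_zero.mp (natCast_eq_zero_of_pderiv_eq_zero (hzero i) hm)
    rw [totalDegree_eq_zero_iff_eq_C.mp hconst] at hq
    have hne : q.coeff 0 ≠ 0 := fun h => hq.ne_zero (by rw [h, map_zero])
    exact hq.not_isUnit (hne.isUnit.map C)
  · have : Fact p.Prime := ⟨hprime⟩
    obtain ⟨g, rfl⟩ := exists_pow_eq_of_pderiv_eq_zero p hzero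
    exact not_irreducible_pow hprime.ne_one hq

theorem isUnit_of_dvd_of_forall_dvd_pderiv {K : Type*} [Field K] [PerfectField K]
    {g p : MvPolynomial σ K} (hg : Squarefree g) (hpg : p ∣ g) (hp : ∀ i, p ∣ pderiv i g) :
    IsUnit p := by
  by_contra hunit
  obtain ⟨q, hq, hqp⟩ :=
    WfDvdMonoid.exists_irreducible_factor hunit (ne_zero_of_dvd_ne_zero hg.ne_zero hpg)
  obtain ⟨k, rfl⟩ := hqp.trans hpg
  have hqk : ¬ q ∣ k := fun h => hq.not_isUnit (hg q (mul_dvd_mul_left q h))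
  obtain ⟨i, hi⟩ := exists_pderiv_ne_zero_of_irreducible hq
  have hdvd : q ∣ pderiv i q * k := by
    have h := hqp.trans (hp i)
    rw [pderiv_mul] at h
    exact (dvd_add_left (dvd_mul_right q _)).mp h
  exact hi (pderiv_eq_zero_of_dvd ((hq.prime.dvd_or_dvd hdvd).resolve_right hqk))

end PartialDerivatives

section DimensionTwo

variable {R : Type*} [CommRing R] [IsDomain R] [UniqueFactorizationMonoid R]

theorem two_le_height_of_forall_le_span_singleton {I : Ideal R}
    (hI : ∀ a, I ≤ Ideal.span {a} → IsUnit a) : 2 ≤ I.height := by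
  rw [Ideal.height_eq_inf_minimalPrimes, le_iInf₂_iff]
  intro P hP
  have := hP.isPrime
  by_contra! hlt
  have hprincipal : P.IsPrincipal := by
    rcases Order.le_one_iff.mp (ENat.lt_natCast_add_one_iff.mp hlt) with h0 | h1
    · rw [Ideal.height_eq_zero_iff_eq_bot.mp h0]
      infer_instance
    · exact UniqueFactorizationMonoid.isPrincipal_of_height_eq_one h1
  obtain ⟨a, rfl⟩ := hprincipal
  exact this.ne_top (Ideal.span_singleton_eq_top.mpr (hI a hP.le))

theorem finite_setOf_isPrime_and_le [IsNoetherianRing R] (hdim : ringKrullDim R ≤ 2)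
    {I : Ideal R} (hI : ∀ a, I ≤ Ideal.span {a} → IsUnit a) :
    {P : Ideal R | P.IsPrime ∧ I ≤ P}.Finite := by
  refine (Ideal.finite_minimalPrimes_of_isNoetherianRing R I).subset fun P ⟨hP, hIP⟩ => ?_
  have hheight : P.height ≤ 2 :=
    WithBot.coe_le_coe.mp (Ideal.height_le_ringKrullDim_of_isPrime.trans hdim)
  exact Ideal.mem_minimalPrimes_of_height_le hIP
    (hheight.trans (two_le_height_of_forall_le_span_singleton hI))

end DimensionTwo

section SingularLocus

variable {σ : Type*}

/-- The singular points of the hypersurface `g = 0`, by the Jacobian criterion; only points with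
coordinates in the base ring are considered. -/
def singularLocus {R : Type*} [CommSemiring R] (g : MvPolynomial σ R) : Set (σ → R) :=
  {x | eval x g = 0 ∧ ∀ i, eval x (pderiv i g) = 0}

variable {K : Type*} [Field K]

theorem vanishingIdeal_singleton_injective :
    Function.Injective fun x : σ → K => vanishingIdeal K {x} := by
  intro x y hxy
  funext i
  have hmem : X i - C (x i) ∈ vanishingIdeal K {y} := by
    rw [← show vanishingIdeal K {x} = vanishingIdeal K {y} from hxy]
    simp
  simpa [sub_eq_zero, eq_comm] using hmem

theorem finite_zeroLocus_of_forall_le_span_singleton [Finite σ] (hσ : Nat.card σ ≤ 2)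
    {I : Ideal (MvPolynomial σ K)} (hI : ∀ a, I ≤ Ideal.span {a} → IsUnit a) :
    (zeroLocus K I).Finite := by
  have hdim : ringKrullDim (MvPolynomial σ K) ≤ 2 := by
    rw [ringKrullDim_of_isNoetherianRing, ringKrullDim_eq_zero_of_field, zero_add]
    exact_mod_cast hσ
  refine ((finite_setOf_isPrime_and_le hdim hI).preimage
    vanishingIdeal_singleton_injective.injOn).subset fun x hx => ⟨inferInstance, ?_⟩
  exact le_zeroLocus_iff_le_vanishingIdeal.mp (Set.singleton_subset_iff.mpr hx)

theorem finite_singularLocus_of_squarefree [PerfectField K] [Finite σ] (hσ : Nat.card σ ≤ 2)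
    {g : MvPolynomial σ K} (hg : Squarefree g) : (singularLocus g).Finite := by
  have hJ : ∀ a, Ideal.span (insert g (Set.range fun i => pderiv i g)) ≤ Ideal.span {a} →
      IsUnit a := fun a ha => by
    simp only [Ideal.span_le, Set.insert_subset_iff, Set.range_subset_iff, SetLike.mem_coe,
      Ideal.mem_span_singleton] at ha
    exact isUnit_of_dvd_of_forall_dvd_pderiv hg ha.1 ha.2
  simpa [zeroLocus_span, singularLocus, aeval_eq_eval] using
    finite_zeroLocus_of_forall_le_span_singleton hσ hJ

end SingularLocus

section Dehomogenization

variable {R : Type*} [CommSemiring R] {n d : ℕ}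

/-- Dehomogenization with respect to the zeroth variable, `F ↦ F(1, y₁, …, yₙ)`. -/
noncomputable def dehomogenize :
    MvPolynomial (Fin (n + 1)) R →ₐ[R] MvPolynomial (Fin n) R :=
  aeval (Fin.cons 1 X)

theorem dehomogenize_X_zero :
    dehomogenize (X 0 : MvPolynomial (Fin (n + 1)) R) = 1 := by
  simp [dehomogenize]

theorem dehomogenize_rename_succ (p : MvPolynomial (Fin n) R) :
    dehomogenize (rename Fin.succ p) = p := by
  rw [dehomogenize, aeval_rename]
  exact aeval_X_left_apply p

theorem dehomogenize_eq_eval_finSuccEquiv (F : MvPolynomial (Fin (n + 1)) R) :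
    dehomogenize F = (finSuccEquiv R n F).eval 1 := by
  induction F using MvPolynomial.induction_on with
  | C a => simp [dehomogenize, algebraMap_eq, finSuccEquiv_apply]
  | add p q hp hq => rw [map_add, map_add, Polynomial.eval_add, hp, hq]
  | mul_X p i hp =>
    rw [map_mul, map_mul, Polynomial.eval_mul, hp]
    congr 1
    refine Fin.cases ?_ (fun j => ?_) i <;>
      simp [dehomogenize, finSuccEquiv_X_zero, finSuccEquiv_X_succ]

theorem natDegree_finSuccEquiv_le_totalDegree (F : MvPolynomial (Fin (n + 1)) R) :
    (finSuccEquiv R n F).natDegree ≤ F.totalDegree :=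
  (natDegree_finSuccEquiv F).trans_le (degreeOf_le_totalDegree F 0)

theorem homogeneousComponent_dehomogenize {F : MvPolynomial (Fin (n + 1)) R}
    (hF : F.IsHomogeneous d) {i j : ℕ} (hij : i + j = d) :
    homogeneousComponent j (dehomogenize F) = (finSuccEquiv R n F).coeff i := by
  have hcoeff : ∀ k ≤ d, ((finSuccEquiv R n F).coeff k).IsHomogeneous (d - k) := fun k hk =>
    hF.finSuccEquiv_coeff_isHomogeneous k (d - k) (Nat.add_sub_of_le hk)
  have hdeg : (finSuccEquiv R n F).natDegree < d + 1 :=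
    Nat.lt_succ_of_le ((natDegree_finSuccEquiv_le_totalDegree F).trans hF.totalDegree_le)
  rw [dehomogenize_eq_eval_finSuccEquiv, Polynomial.eval_eq_sum_range' hdeg]
  simp only [one_pow, mul_one, map_sum]
  rw [Finset.sum_eq_single_of_mem i (Finset.mem_range.mpr (by lia))]
  · rw [homogeneousComponent_of_mem (hcoeff i (by lia)), if_pos (by lia)]
  · intro k hk hki
    rw [Finset.mem_range] at hk
    rw [homogeneousComponent_of_mem (hcoeff k (by lia)), if_neg (by lia)]

theorem eq_of_dehomogenize_eq {F G : MvPolynomial (Fin (n + 1)) R}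
    (hF : F.IsHomogeneous d) (hG : G.IsHomogeneous d) (h : dehomogenize F = dehomogenize G) :
    F = G := by
  refine (finSuccEquiv R n).injective (Polynomial.ext fun i => ?_)
  rcases le_or_gt i d with hi | hi
  · rw [← homogeneousComponent_dehomogenize hF (Nat.add_sub_of_le hi), h,
      homogeneousComponent_dehomogenize hG (Nat.add_sub_of_le hi)]
  · have hcoeff : ∀ H : MvPolynomial (Fin (n + 1)) R, H.IsHomogeneous d →
        (finSuccEquiv R n H).coeff i = 0 := fun H hH =>
      Polynomial.coeff_eq_zero_of_natDegree_lt
        (((natDegree_finSuccEquiv_le_totalDegree H).trans hH.totalDegree_le).trans_lt hi)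
    rw [hcoeff F hF, hcoeff G hG]

theorem exists_isHomogeneous_dehomogenize_eq (p : MvPolynomial (Fin n) R) :
    ∃ P : MvPolynomial (Fin (n + 1)) R,
      P.IsHomogeneous p.totalDegree ∧ dehomogenize P = p := by
  refine ⟨∑ k ∈ Finset.range (p.totalDegree + 1),
    X 0 ^ (p.totalDegree - k) * rename Fin.succ (homogeneousComponent k p), ?_, ?_⟩
  · refine IsHomogeneous.sum _ _ _ fun k hk => ?_
    have hdeg : p.totalDegree = (p.totalDegree - k) + k :=
      (Nat.sub_add_cancel (Finset.mem_range_succ_iff.mp hk)).symm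
    nth_rw 2 [hdeg]
    exact (isHomogeneous_X_pow 0 _).mul
      (homogeneousComponent_isHomogeneous k p).rename_isHomogeneous
  · simp only [map_sum, map_mul, map_pow, dehomogenize_X_zero, one_pow, one_mul,
      dehomogenize_rename_succ, sum_homogeneousComponent]

theorem totalDegree_dehomogenize_le (F : MvPolynomial (Fin (n + 1)) R) :
    (dehomogenize F).totalDegree ≤ F.totalDegree := by
  rw [dehomogenize_eq_eval_finSuccEquiv, Polynomial.eval_eq_sum]
  simp only [one_pow, mul_one]
  refine totalDegree_finsetSum_le fun i hi => ?_
  exact (Nat.le_add_right _ i).trans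
    (totalDegree_coeff_finSuccEquiv_add_le F i (Polynomial.mem_support_iff.mp hi))

theorem squarefree_dehomogenize [Nontrivial R] [NoZeroDivisors R]
    {F : MvPolynomial (Fin (n + 1)) R} (hF : F.IsHomogeneous d) (hsq : Squarefree F) :
    Squarefree (dehomogenize F) := by
  rintro p ⟨q, hpq⟩
  have hne : p * p * q ≠ 0 := fun h =>
    hsq.ne_zero (eq_of_dehomogenize_eq hF (isHomogeneous_zero _ _ d) (by rw [hpq, h, map_zero]))
  have hpp : p * p ≠ 0 := left_ne_zero_of_mul hne
  have hp : p ≠ 0 := left_ne_zero_of_mul hpp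
  have hdeg : p.totalDegree + p.totalDegree + q.totalDegree ≤ d := by
    rw [← totalDegree_mul_of_isDomain hp hp,
      ← totalDegree_mul_of_isDomain hpp (right_ne_zero_of_mul hne), ← hpq]
    exact (totalDegree_dehomogenize_le F).trans hF.totalDegree_le
  obtain ⟨P, hP, hPp⟩ := exists_isHomogeneous_dehomogenize_eq p
  obtain ⟨Q, hQ, hQq⟩ := exists_isHomogeneous_dehomogenize_eq q
  obtain ⟨e, he⟩ := Nat.exists_eq_add_of_le hdeg
  have hfactor : F = P * P * Q * X 0 ^ e := by
    refine eq_of_dehomogenize_eq hF ?_ ?_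
    · rw [he]
      exact ((hP.mul hP).mul hQ).mul (isHomogeneous_X_pow 0 e)
    · simp only [map_mul, map_pow, hPp, hQq, hpq, dehomogenize_X_zero, one_pow, mul_one]
  rw [← hPp]
  exact (hsq P ⟨Q * X 0 ^ e, by rw [hfactor, mul_assoc]⟩).map dehomogenize

end Dehomogenization

section StrictTransform

variable {R : Type*} [CommSemiring R] {n : ℕ}

/-- The strict transform `∑ j, y₀ ^ j * f_{d + j}(1, y₁, …, yₙ)` in the chart
`z₀ = y₀`, `zᵢ = y₀ yᵢ` of the blow-up of the origin. Components of `f` of degree below `d` are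
discarded, so this is only meaningful for `f` of order at least `d`. -/
noncomputable def strictTransform (d : ℕ) (f : MvPolynomial (Fin (n + 1)) R) :
    MvPolynomial (Fin (n + 1)) R :=
  ∑ j ∈ Finset.range (f.totalDegree + 1),
    X 0 ^ j * rename Fin.succ (dehomogenize (homogeneousComponent (d + j) f))

theorem exists_strictTransform_eq_add (d : ℕ) (f : MvPolynomial (Fin (n + 1)) R) :
    ∃ h, strictTransform d f =
      rename Fin.succ (dehomogenize (homogeneousComponent d f)) + X 0 * h := by
  refine ⟨∑ j ∈ Finset.range f.totalDegree,
    X 0 ^ j * rename Fin.succ (dehomogenize (homogeneousComponent (d + (j + 1)) f)), ?_⟩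
  rw [strictTransform, Finset.sum_range_succ', Finset.mul_sum, add_comm (Finset.sum _ _)]
  simp only [pow_zero, one_mul, add_zero, pow_succ', mul_assoc]

theorem mem_singularLocus_of_cons_zero_mem {d : ℕ}
    {f : MvPolynomial (Fin (n + 1)) R} {x : Fin n → R}
    (hx : (Fin.cons 0 x : Fin (n + 1) → R) ∈ singularLocus (strictTransform d f)) :
    x ∈ singularLocus (dehomogenize (homogeneousComponent d f)) := by
  obtain ⟨h, hst⟩ := exists_strictTransform_eq_add d f
  have heval : ∀ p, eval (Fin.cons 0 x : Fin (n + 1) → R) (rename Fin.succ p) = eval x p :=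
    fun p => by rw [eval_rename, Fin.cons_comp_succ]
  rw [hst] at hx
  refine ⟨by simpa [heval] using hx.1, fun i => ?_⟩
  simpa [pderiv_rename (Fin.succ_injective n), heval, pderiv_X_of_ne (Fin.succ_ne_zero i).symm]
    using hx.2 i.succ

theorem rename_succ_dehomogenize (F : MvPolynomial (Fin 3) R) :
    rename Fin.succ (dehomogenize F) = aeval ![1, X 1, X 2] F := by
  rw [dehomogenize, ← AlgHom.comp_apply, comp_aeval]
  congr 2
  funext i
  fin_cases i
  · simp
  · simp
  · exact rename_X _ _

end StrictTransform

theorem finite_singular_points_on_exceptional_divisor_general {K : Type*} [Field K]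
    [PerfectField K] (d : ℕ) (f : MvPolynomial (Fin 3) K)
    (hsq : Squarefree (homogeneousComponent d f)) (ftilde : MvPolynomial (Fin 3) K)
    (hft : ftilde =
      ∑ j ∈ Finset.range (f.totalDegree + 1),
        X 0 ^ j * aeval ![1, X 1, X 2] (homogeneousComponent (d + j) f)) :
    {p : K × K |
      eval ![0, p.1, p.2] ftilde = 0 ∧
      ∀ i : Fin 3, eval ![0, p.1, p.2] (pderiv i ftilde) = 0}.Finite := by
  have hst : ftilde = strictTransform d f := by
    simp only [hft, strictTransform, rename_succ_dehomogenize]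
  have hfinite : (singularLocus (dehomogenize (homogeneousComponent d f))).Finite :=
    finite_singularLocus_of_squarefree (by simp)
      (squarefree_dehomogenize (homogeneousComponent_isHomogeneous d f) hsq)
  refine (hfinite.preimage (finTwoArrowEquiv K).symm.injective.injOn).subset fun p hp => ?_
  rw [hst] at hp
  exact mem_singularLocus_of_cons_zero_mem hp

/-- Chart form of Lemma 3.4: if the tangent cone `f_d` is squarefree (i.e. reduced),
then the strict transform `f̃ = Σ_j y₁^j · f_{d+j}(1,y₂,y₃)` of `V(f)` has only
finitely many singular points on the exceptional divisor `y₁ = 0`. -/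
theorem finite_singular_points_on_exceptional_divisor
    (d : ℕ) (hd : 1 ≤ d) (f : MvPolynomial (Fin 3) ℂ)
    (horder : ∀ k < d, homogeneousComponent k f = 0)
    (hsq : Squarefree (homogeneousComponent d f))
    (ftilde : MvPolynomial (Fin 3) ℂ)
    (hft : ftilde =
      ∑ j ∈ Finset.range (f.totalDegree + 1),
        X 0 ^ j * aeval ![1, X 1, X 2] (homogeneousComponent (d + j) f)) :
    {p : ℂ × ℂ |
      eval ![0, p.1, p.2] ftilde = 0 ∧
      ∀ i : Fin 3, eval ![0, p.1, p.2] (pderiv i ftilde) = 0}.Finite :=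
  finite_singular_points_on_exceptional_divisor_general d f hsq ftilde hft
end

section
/- Let g ∈ MvPolynomial (Fin 3) ℂ, with variables X₁,X₂,X₃, be of the form g = X₂² + X₃² + r, where every exponent vector in the support of r has positive X₁-exponent. Assume that the origin is an isolated point of the set {z ∈ ℂ³ : g(z) = 0 and all three partial derivatives of g vanish at z}. Then there exist an integer ℓ ≥ 1, a constant c ∈ ℂ with c ≠ 0, and one-variable polynomials p, q ∈ Polynomial ℂ with p(0) = q(0) = 0, such that the polynomial g' := g(X₁, X₂ − p(X₁), X₃ − q(X₁)) (obtained from g by the admissible coordinate change x₂ ↦ x₂ + p(x₁), x₃ ↦ x₃ + q(x₁)) can be written g' = X₂² + X₃² + c·X₁^ℓ + R, where every exponent vector (a,b,e) in the support of R satisfies a ≥ 1 and 2a + ℓ(b+e) > 2ℓ. (Polynomial form of Lemma 4.1: at an A₁-point, the Newton principal part of the strict transform can be brought to the form x₂² + x₃² + c x₁^ℓ, all remaining monomials lying strictly above the Newton boundary.) -/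
open MvPolynomial

/-!
Since the Hessian of `g` in the variables other than `x₁` is invertible at the origin, the implicit
function theorem gives an analytic curve `x₁ ↦ (x₁, γ(x₁))` along which all partial derivatives of
`g` except the first vanish. If `g` vanished along this curve, so would `∂g/∂x₁`, and the curve
would consist of singular zeros; hence isolatedness forces `g(x₁, γ(x₁)) = c x₁^ℓ + O(x₁^(ℓ+1))`
with `c ≠ 0`. Translating the other variables by a Taylor polynomial of `γ` of degree `≤ ℓ` moves
the curve into `O(x₁^(ℓ+1))` of the `x₁`-axis. A monomial divisible by `x₁` and not above the
Newton boundary is `x₁^k` or `x₁^k xᵢ` with `k ≤ ℓ`, and its coefficient is read off from the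
restriction to the `x₁`-axis of the polynomial or of its `i`-th partial derivative.
-/

section Algebra

variable {R : Type*} [CommRing R] {n : ℕ}

theorem X_dvd_iff_forall_mem_support {σ : Type*} {i : σ} {f : MvPolynomial σ R} :
    X i ∣ f ↔ ∀ m ∈ f.support, 1 ≤ m i := by
  simpa [Ideal.mem_span_singleton, Nat.one_le_iff_ne_zero] using
    mem_ideal_span_X_image (x := f) (s := {i})

theorem constantCoeff_eq_zero_of_X_dvd {σ : Type*} {i : σ} {f : MvPolynomial σ R} (hf : X i ∣ f) :
    constantCoeff f = 0 := by
  simpa using map_dvd constantCoeff hf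

theorem X_dvd_pderiv_of_ne {σ : Type*} {i j : σ} (hij : i ≠ j) {f : MvPolynomial σ R}
    (hf : X j ∣ f) : X j ∣ pderiv i f := by
  obtain ⟨q, rfl⟩ := hf
  simp [Derivation.leibniz, pderiv_X_of_ne hij.symm]

theorem pderiv_succ_sum_X_sq (i : Fin n) :
    pderiv i.succ (∑ j : Fin n, X j.succ ^ 2 : MvPolynomial (Fin (n + 1)) R) =
      C 2 * X i.succ := by
  have hC : C 2 = (2 : MvPolynomial (Fin (n + 1)) R) := map_ofNat C 2
  simp [hC, Derivation.leibniz_pow, pderiv_X, Pi.single_apply, two_mul]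

/-- Restriction of a polynomial to the graph `x ↦ (x, φ₁(x), …, φₙ(x))` of a polynomial map, as a
polynomial in the parameter `x`; the coordinate `X 0` is the one parametrizing the graph. -/
noncomputable def restrictGraph (φ : Fin n → Polynomial R) :
    MvPolynomial (Fin (n + 1)) R →ₐ[R] Polynomial R :=
  aeval (Fin.cons Polynomial.X φ)

/-- The substitution `Xᵢ ↦ Xᵢ - pᵢ(X₀)` for `i ≠ 0`, that is, a polynomial expressed in the
coordinates `xᵢ + pᵢ(x₀)` of an admissible change; `pᵢ` is indexed by `i - 1`. -/
noncomputable def shear (p : Fin n → Polynomial R) :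
    MvPolynomial (Fin (n + 1)) R →ₐ[R] MvPolynomial (Fin (n + 1)) R :=
  aeval (Fin.cons (X 0) fun i => X i.succ - Polynomial.aeval (X 0) (p i))

theorem eval_restrictGraph (φ : Fin n → Polynomial R) (f : MvPolynomial (Fin (n + 1)) R) (x : R) :
    (restrictGraph φ f).eval x = eval (Fin.cons x fun i => (φ i).eval x) f := by
  suffices (Polynomial.aeval x).comp (restrictGraph φ) =
      aeval (Fin.cons x fun i => (φ i).eval x) from DFunLike.congr_fun this f
  ext i
  refine Fin.cases ?_ (fun j => ?_) i <;> simp [restrictGraph]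

theorem restrictGraph_shear (φ p : Fin n → Polynomial R) (f : MvPolynomial (Fin (n + 1)) R) :
    restrictGraph φ (shear p f) = restrictGraph (φ - p) f := by
  suffices (restrictGraph φ).comp (shear p) = restrictGraph (φ - p) from DFunLike.congr_fun this f
  ext i
  refine Fin.cases ?_ (fun j => ?_) i <;>
    simp [restrictGraph, shear, ← Polynomial.aeval_algHom_apply]

theorem pderiv_succ_shear (p : Fin n → Polynomial R) (f : MvPolynomial (Fin (n + 1)) R)
    (i : Fin n) : pderiv i.succ (shear p f) = shear p (pderiv i.succ f) := by
  induction f using MvPolynomial.induction_on with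
  | C a => simp [shear, algebraMap_eq]
  | add f g hf hg => simp only [map_add, hf, hg]
  | mul_X f j hf =>
    have hX : pderiv i.succ (shear p (X j)) = shear p (pderiv i.succ (X j)) := by
      refine Fin.cases (by simp [shear]) (fun k => ?_) j
      have hk :
          pderiv i.succ (Polynomial.aeval (X 0) (p k) : MvPolynomial (Fin (n + 1)) R) = 0 := by
        rw [Derivation.map_aeval, pderiv_X_of_ne i.succ_ne_zero.symm, smul_zero]
      rcases eq_or_ne k i with rfl | hki
      · simp [shear, hk]
      · simp [shear, hk, hki]
    simp only [map_mul, Derivation.leibniz, hf, hX, smul_eq_mul, map_add]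

theorem X_zero_dvd_shear_sub_self {p : Fin n → Polynomial R} (hp : ∀ i, (p i).eval 0 = 0)
    (f : MvPolynomial (Fin (n + 1)) R) : X 0 ∣ shear p f - f := by
  have hX (j : Fin n) : X 0 ∣ Polynomial.aeval (X 0 : MvPolynomial (Fin (n + 1)) R) (p j) := by
    have hj : Polynomial.X ∣ p j :=
      Polynomial.X_dvd_iff.2 ((p j).coeff_zero_eq_eval_zero.trans (hp j))
    simpa using map_dvd (Polynomial.aeval (X 0 : MvPolynomial (Fin (n + 1)) R)) hj
  simp only [← Ideal.mem_span_singleton] at hX ⊢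
  rw [← Ideal.Quotient.mk_eq_mk_iff_sub_mem]
  set I : Ideal (MvPolynomial (Fin (n + 1)) R) := Ideal.span {X 0}
  suffices (Ideal.Quotient.mkₐ R I).comp (shear p) = Ideal.Quotient.mkₐ R I from
    DFunLike.congr_fun this f
  ext i
  refine Fin.cases ?_ (fun j => ?_) i
  · simp [shear]
  · simpa [shear] using Ideal.Quotient.eq_zero_iff_mem.2 (hX j)

theorem coeff_restrictGraph_zero (f : MvPolynomial (Fin (n + 1)) R) (k : ℕ) :
    (restrictGraph 0 f).coeff k = coeff (Finsupp.cons k 0) f := by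
  have h : restrictGraph 0 = (Polynomial.mapAlgHom (aeval (0 : Fin n → R))).comp
      (finSuccEquiv R n).toAlgHom := by
    ext i : 1
    refine Fin.cases ?_ (fun j => ?_) i <;>
      simp [restrictGraph, finSuccEquiv_X_zero, finSuccEquiv_X_succ]
  rw [h, ← finSuccEquiv_coeff_coeff, ← constantCoeff_eq]
  simp

theorem coeff_restrictGraph_zero_pderiv_succ (f : MvPolynomial (Fin (n + 1)) R) (k : ℕ)
    (i : Fin n) :
    (restrictGraph 0 (pderiv i.succ f)).coeff k =
      coeff (Finsupp.cons k (Finsupp.single i 1)) f := by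
  have h : Finsupp.cons k 0 + Finsupp.single i.succ 1 = Finsupp.cons k (Finsupp.single i 1) := by
    ext j
    refine Fin.cases ?_ (fun j => ?_) j <;> simp [Finsupp.single_apply]
  simp [coeff_restrictGraph_zero, coeff_pderiv, h]

theorem eq_cons_zero_or_eq_cons_single_of_sum_succ_le_one {m : Fin (n + 1) →₀ ℕ}
    (hm : ∑ i : Fin n, m i.succ ≤ 1) :
    m = Finsupp.cons (m 0) 0 ∨ ∃ i : Fin n, m = Finsupp.cons (m 0) (Finsupp.single i 1) := by
  rcases Nat.le_one_iff_eq_zero_or_eq_one.1 hm with h | h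
  · have htail : m.tail = 0 := Finsupp.ext fun i => Finset.sum_eq_zero_iff.1 h i (Finset.mem_univ i)
    exact .inl (by rw [← htail, Finsupp.cons_tail])
  · have hsum : m.tail.sum (fun _ k => k) = 1 := (Finsupp.sum_fintype _ _ fun _ => rfl).trans h
    obtain ⟨i, hi⟩ := (Finsupp.sum_eq_one_iff _).1 hsum
    exact .inr ⟨i, by rw [← hi, Finsupp.cons_tail]⟩

theorem two_mul_lt_of_X_pow_dvd_restrictGraph {ℓ : ℕ} {f : MvPolynomial (Fin (n + 1)) R}
    (hf : Polynomial.X ^ (ℓ + 1) ∣ restrictGraph 0 f)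
    (hf' : ∀ i : Fin n, Polynomial.X ^ (ℓ + 1) ∣ restrictGraph 0 (pderiv i.succ f))
    {m : Fin (n + 1) →₀ ℕ} (hm : m ∈ f.support) (hm0 : 1 ≤ m 0) :
    2 * ℓ < 2 * m 0 + ℓ * ∑ i : Fin n, m i.succ := by
  by_contra! hle
  have hsum : ∑ i : Fin n, m i.succ ≤ 1 := by
    by_contra! hlt
    have : ℓ * 2 ≤ ℓ * ∑ i : Fin n, m i.succ := Nat.mul_le_mul_left _ hlt
    omega
  have hlt : m 0 < ℓ + 1 := by omega
  refine mem_support_iff.1 hm ?_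
  rcases eq_cons_zero_or_eq_cons_single_of_sum_succ_le_one hsum with h | ⟨i, h⟩
  · rw [h, ← coeff_restrictGraph_zero]
    exact Polynomial.X_pow_dvd_iff.1 hf _ hlt
  · rw [h, ← coeff_restrictGraph_zero_pderiv_succ]
    exact Polynomial.X_pow_dvd_iff.1 (hf' i) _ hlt

theorem two_mul_lt_of_X_pow_dvd_restrictGraph_sub {g r : MvPolynomial (Fin (n + 1)) R}
    (hg : g = ∑ i : Fin n, X i.succ ^ 2 + r) (hr : X 0 ∣ r) {ℓ : ℕ} (hℓ : ℓ ≠ 0) {c : R}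
    {φ : Fin n → Polynomial R} (hφ : ∀ i, (φ i).eval 0 = 0)
    (hφg : Polynomial.X ^ (ℓ + 1) ∣ restrictGraph φ g - Polynomial.C c * Polynomial.X ^ ℓ)
    (hφg' : ∀ i : Fin n, Polynomial.X ^ (ℓ + 1) ∣ restrictGraph φ (pderiv i.succ g)) :
    ∀ m ∈ (shear (-φ) g - (∑ i : Fin n, X i.succ ^ 2 + C c * X 0 ^ ℓ)).support,
      1 ≤ m 0 ∧ 2 * ℓ < 2 * m 0 + ℓ * ∑ i : Fin n, m i.succ := by
  set f := shear (-φ) g - (∑ i : Fin n, X i.succ ^ 2 + C c * X 0 ^ ℓ) with hf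
  have hX : X 0 ∣ f := by
    have hsplit : f = (shear (-φ) g - g) + r - C c * X 0 ^ ℓ := by rw [hf, hg]; ring
    rw [hsplit]
    exact ((X_zero_dvd_shear_sub_self (by simpa using hφ) g).add hr).sub
      ((dvd_pow_self _ hℓ).mul_left _)
  have hf0 : restrictGraph 0 f = restrictGraph φ g - Polynomial.C c * Polynomial.X ^ ℓ := by
    rw [hf, map_sub, restrictGraph_shear, zero_sub, neg_neg]
    simp [restrictGraph]
  have hf1 (i : Fin n) : restrictGraph 0 (pderiv i.succ f) = restrictGraph φ (pderiv i.succ g) := by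
    rw [hf, map_sub, map_sub, pderiv_succ_shear, restrictGraph_shear, zero_sub, neg_neg, map_add,
      pderiv_succ_sum_X_sq]
    simp [restrictGraph]
  intro m hm
  have hm0 := X_dvd_iff_forall_mem_support.1 hX m hm
  exact ⟨hm0, two_mul_lt_of_X_pow_dvd_restrictGraph (hf0 ▸ hφg) (fun i => hf1 i ▸ hφg' i) hm hm0⟩

end Algebra

section Analysis

open Asymptotics Filter Topology

variable {𝕜 : Type*} [NontriviallyNormedField 𝕜] {n : ℕ}

theorem X_pow_dvd_of_eval_isBigO {f : Polynomial 𝕜} {N : ℕ}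
    (hf : (fun x => f.eval x) =O[𝓝 0] fun x : 𝕜 => x ^ N) : Polynomial.X ^ N ∣ f := by
  by_contra hN
  have hf0 : f ≠ 0 := fun h => hN (h ▸ dvd_zero _)
  obtain ⟨q, hfq, hq⟩ := Polynomial.exists_eq_pow_rootMultiplicity_mul_and_not_dvd f hf0 0
  set m := f.rootMultiplicity 0
  rw [Polynomial.dvd_iff_isRoot] at hq
  rw [Polynomial.C_0, sub_zero] at hfq
  have hmN : m < N := by
    by_contra! h
    exact hN (hfq ▸ (pow_dvd_pow _ h).mul_right q)
  have hunit : (fun _ => (1 : 𝕜)) =O[𝓝 0] fun x => q.eval x :=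
    (isBigO_const_const 1 hq _).trans
      ((isEquivalent_const_iff_tendsto hq).2 q.continuous.continuousAt).isBigO_symm
  have hm : (fun x : 𝕜 => x ^ m) =O[𝓝 0] fun x => f.eval x := by
    rw [hfq]
    simpa using (isBigO_refl (fun x : 𝕜 => x ^ m) _).mul hunit
  have hne : ∃ᶠ x : 𝕜 in 𝓝 0, x ^ m ≠ 0 := by
    refine (Eventually.frequently ?_ : ∃ᶠ x : 𝕜 in 𝓝[≠] 0, _).filter_mono nhdsWithin_le_nhds
    filter_upwards [self_mem_nhdsWithin] with x hx using pow_ne_zero m hx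
  exact isLittleO_irrefl hne ((hm.trans hf).trans_isLittleO (isLittleO_pow_pow hmN))

theorem hasStrictFDerivAt_eval {σ : Type*} [Fintype σ] (f : MvPolynomial σ 𝕜) (z : σ → 𝕜) :
    HasStrictFDerivAt (fun w => eval w f)
      (∑ i, eval z (pderiv i f) • ContinuousLinearMap.proj (R := 𝕜) (φ := fun _ : σ => 𝕜) i) z := by
  classical
  induction f using MvPolynomial.induction_on with
  | C a =>
    refine ((hasStrictFDerivAt_const (𝕜 := 𝕜) a z).congr_fderiv ?_).congr_of_eventuallyEq ?_
    · ext; simp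
    · simp
  | add f g hf hg =>
    simp only [map_add]
    refine (hf.add hg).congr_fderiv ?_
    ext v
    simp [add_mul, Finset.sum_add_distrib]
  | mul_X f j hf =>
    simp only [map_mul, eval_X]
    refine (hf.mul (hasStrictFDerivAt_apply j z)).congr_fderiv ?_
    ext v
    simp [pderiv_X, Pi.single_apply, add_mul, Finset.sum_add_distrib, Finset.mul_sum, mul_assoc,
      apply_ite]

theorem isBigO_eval_cons_sub {γ δ : 𝕜 → Fin n → 𝕜} {x₀ : 𝕜} (hγ : ContinuousAt γ x₀)
    (hδ : ContinuousAt δ x₀) (h : γ x₀ = δ x₀) (f : MvPolynomial (Fin (n + 1)) 𝕜) :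
    (fun x => eval (Fin.cons x (γ x)) f - eval (Fin.cons x (δ x)) f) =O[𝓝 x₀]
      fun x => γ x - δ x := by
  have hγ' := (continuousAt_id.finCons (A := fun _ => 𝕜) hγ).tendsto
  have hδ' := (continuousAt_id.finCons (A := fun _ => 𝕜) hδ).tendsto
  rw [← h] at hδ'
  have hcons := (hasStrictFDerivAt_eval f _).isBigO_sub.comp_tendsto (hγ'.prodMk_nhds hδ')
  simp only [Function.comp_def, id_eq] at hcons
  refine hcons.trans (isBigO_pi.2 (Fin.cases ?_ fun j => ?_))
  · simpa using isBigO_zero _ _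
  · simpa using isBigO_pi.1 (isBigO_refl (fun x => γ x - δ x) _) j

theorem exists_analyticAt_implicitFunction {E F G : Type*}
    [NormedAddCommGroup E] [NormedSpace 𝕜 E] [CompleteSpace E]
    [NormedAddCommGroup F] [NormedSpace 𝕜 F] [CompleteSpace F]
    [NormedAddCommGroup G] [NormedSpace 𝕜 G] [CompleteSpace G]
    {f : E × F → G} {u : E × F} (hf : AnalyticAt 𝕜 f u)
    (hf' : (fderiv 𝕜 f u ∘L .inr 𝕜 E F).IsInvertible) :
    ∃ γ : E → F, AnalyticAt 𝕜 γ u.1 ∧ γ u.1 = u.2 ∧ ∀ᶠ x in 𝓝 u.1, f (x, γ x) = f u := by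
  let Φ := hf.hasStrictFDerivAt.implicitFunctionDataOfProdDomain hf'
  have hΦ : AnalyticAt 𝕜 Φ.implicitFunction.uncurry (Φ.prodFun u) :=
    Φ.toOpenPartialHomeomorph.analyticAt_symm' Φ.pt_mem_toOpenPartialHomeomorph_source
      (hf.prod analyticAt_fst) Φ.hasStrictFDerivAt.hasFDerivAt.fderiv
  refine ⟨hf.hasStrictFDerivAt.implicitFunctionOfProdDomain hf', ?_,
    eq_of_tendsto_nhds (hf.hasStrictFDerivAt.tendsto_implicitFunctionOfProdDomain hf'),
    hf.hasStrictFDerivAt.eventually_apply_implicitFunctionOfProdDomain hf'⟩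
  exact analyticAt_snd.comp <|
    hΦ.comp (f := fun x => (f u, x)) (analyticAt_const.prod analyticAt_id)

theorem exists_polynomial_isBigO_sub {f : 𝕜 → 𝕜} (hf : AnalyticAt 𝕜 f 0) (N : ℕ) :
    ∃ p : Polynomial 𝕜, (fun x => f x - p.eval x) =O[𝓝 0] fun x => x ^ N := by
  obtain ⟨s, hs⟩ := hf
  refine ⟨∑ k ∈ Finset.range N, Polynomial.C (s.coeff k) * Polynomial.X ^ k, ?_⟩
  have htaylor : (fun x => f x - s.partialSum N x) =O[𝓝 0] fun x => x ^ N := by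
    simpa [← norm_pow] using hs.isBigO_sub_partialSum_pow N
  refine htaylor.congr_left fun x => ?_
  simp [FormalMultilinearSeries.partialSum, Polynomial.eval_finsetSum, mul_comm (x ^ _)]

theorem exists_isBigO_sub_const_mul_pow {f : 𝕜 → 𝕜} (hf : AnalyticAt 𝕜 f 0)
    (hne : ¬ ∀ᶠ x in 𝓝 0, f x = 0) :
    ∃ (ℓ : ℕ) (c : 𝕜), c ≠ 0 ∧ (fun x => f x - c * x ^ ℓ) =O[𝓝 0] fun x => x ^ (ℓ + 1) := by
  obtain ⟨h, hh, hh0, hfh⟩ := hf.analyticOrderAt_ne_top.1 (analyticOrderAt_eq_top.not.2 hne)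
  set ℓ := analyticOrderNatAt f 0
  refine ⟨ℓ, h 0, hh0, ?_⟩
  have hsub : (fun x => h x - h 0) =O[𝓝 0] fun x : 𝕜 => x := by
    simpa using hh.differentiableAt.isBigO_sub
  have hmul := (isBigO_refl (fun x : 𝕜 => x ^ ℓ) (𝓝 0)).mul hsub
  simp only [← pow_succ] at hmul
  refine hmul.congr' ?_ .rfl
  filter_upwards [hfh] with x hx
  simp only [hx, sub_zero, smul_eq_mul]
  ring

theorem analyticAt_eval_cons {γ : 𝕜 → Fin n → 𝕜} {x : 𝕜} (hγ : AnalyticAt 𝕜 γ x)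
    (f : MvPolynomial (Fin (n + 1)) 𝕜) :
    AnalyticAt 𝕜 (fun y => eval (Fin.cons y (γ y)) f) x := by
  refine AnalyticAt.aeval_mvPolynomial (fun i => ?_) f
  refine Fin.cases analyticAt_id (fun j => ?_) i
  exact analyticAt_pi_iff.1 hγ j

theorem hasDerivAt_eval_cons {γ : 𝕜 → Fin n → 𝕜} {γ' : Fin n → 𝕜} {x : 𝕜}
    (hγ : HasDerivAt γ γ' x) (f : MvPolynomial (Fin (n + 1)) 𝕜) :
    HasDerivAt (fun y => eval (Fin.cons y (γ y)) f)
      (eval (Fin.cons x (γ x)) (pderiv 0 f) +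
        ∑ i : Fin n, eval (Fin.cons x (γ x)) (pderiv i.succ f) * γ' i) x := by
  have hcons : HasDerivAt (fun y => (Fin.cons y (γ y) : Fin (n + 1) → 𝕜)) (Fin.cons 1 γ') x :=
    (hasDerivAt_id x).finCons hγ
  refine ((hasStrictFDerivAt_eval f _).hasFDerivAt.comp_hasDerivAt x hcons).congr_deriv ?_
  simp [Fin.sum_univ_succ]

theorem not_eventually_eval_cons_eq_zero {g : MvPolynomial (Fin (n + 1)) 𝕜}
    (hiso : ∀ᶠ z in 𝓝 (0 : Fin (n + 1) → 𝕜),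
      (eval z g = 0 ∧ ∀ i, eval z (pderiv i g) = 0) → z = 0)
    {γ : 𝕜 → Fin n → 𝕜} (hγ : ∀ᶠ x in 𝓝 0, DifferentiableAt 𝕜 γ x) (hγ0 : γ 0 = 0)
    (hcrit : ∀ᶠ x in 𝓝 0, ∀ i : Fin n, eval (Fin.cons x (γ x)) (pderiv i.succ g) = 0) :
    ¬ ∀ᶠ x in 𝓝 0, eval (Fin.cons x (γ x)) g = 0 := by
  intro hzero
  have hcurve : ContinuousAt (fun x => (Fin.cons x (γ x) : Fin (n + 1) → 𝕜)) 0 :=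
    continuousAt_id.finCons (A := fun _ => 𝕜) hγ.self_of_nhds.continuousAt
  have horigin : (Fin.cons 0 (γ 0) : Fin (n + 1) → 𝕜) = 0 := hγ0 ▸ Matrix.cons_zero_zero
  have honly : ∀ᶠ x : 𝕜 in 𝓝 0, x = 0 := by
    filter_upwards [hcurve.eventually (horigin.symm ▸ hiso), hzero.eventually_nhds, hcrit, hγ]
      with x hxiso hxzero hxcrit hxγ
    have hderiv := (hasDerivAt_eval_cons hxγ.hasDerivAt g).unique
      ((hasDerivAt_const x 0).congr_of_eventuallyEq hxzero)
    have hpderiv : eval (Fin.cons x (γ x)) (pderiv 0 g) = 0 := by simpa [hxcrit] using hderiv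
    exact congrFun (hxiso ⟨hxzero.self_of_nhds, Fin.cases hpderiv hxcrit⟩) 0
  have hpunctured : ∀ᶠ x : 𝕜 in 𝓝[≠] 0, x = 0 := honly.filter_mono nhdsWithin_le_nhds
  obtain ⟨x, hx, hx'⟩ := (hpunctured.and self_mem_nhdsWithin).exists
  exact hx' hx

theorem exists_analyticAt_eval_cons_eq_zero [CompleteSpace 𝕜]
    {F : Fin n → MvPolynomial (Fin (n + 1)) 𝕜} (hF : ∀ i, eval 0 (F i) = 0)
    (hF' : IsUnit (Matrix.of fun i j : Fin n => eval 0 (pderiv j.succ (F i)))) :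
    ∃ γ : 𝕜 → Fin n → 𝕜, AnalyticAt 𝕜 γ 0 ∧ γ 0 = 0 ∧
      ∀ᶠ x in 𝓝 0, ∀ i, eval (Fin.cons x (γ x)) (F i) = 0 := by
  let f : 𝕜 × (Fin n → 𝕜) → Fin n → 𝕜 := fun u i => eval (Fin.cons u.1 u.2) (F i)
  let J := Matrix.of fun i j : Fin n => eval 0 (pderiv j.succ (F i))
  have horigin : (Fin.cons 0 0 : Fin (n + 1) → 𝕜) = 0 := Matrix.cons_zero_zero
  have hf0 : f 0 = 0 := funext fun i => by simpa [f, horigin] using hF i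
  have hf : AnalyticAt 𝕜 f 0 := by
    refine analyticAt_pi_iff.2 fun i => AnalyticAt.aeval_mvPolynomial (fun j => ?_) (F i)
    refine Fin.cases analyticAt_fst (fun k => ?_) j
    exact analyticAt_pi_iff.1 analyticAt_snd k
  have hfibre : HasFDerivAt (fun y => f (0, y)) J.toLin'.toContinuousLinearMap 0 := by
    refine hasFDerivAt_pi'.2 fun i => ?_
    have hcons : HasFDerivAt (fun y => (Fin.cons 0 y : Fin (n + 1) → 𝕜)) _ 0 :=
      (hasFDerivAt_const (0 : 𝕜) 0).finCons (F' := fun _ => 𝕜) (hasFDerivAt_id (𝕜 := 𝕜) _)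
    refine ((hasStrictFDerivAt_eval (F i) _).hasFDerivAt.comp 0 hcons).congr_fderiv ?_
    ext v
    simp [J, Fin.sum_univ_succ, horigin, Matrix.mulVec, dotProduct]
  have hf' : fderiv 𝕜 f 0 ∘L .inr 𝕜 𝕜 (Fin n → 𝕜) = J.toLin'.toContinuousLinearMap :=
    (hf.differentiableAt.hasFDerivAt.comp (0 : Fin n → 𝕜) (hasFDerivAt_prodMk_right 0 0)).unique
      hfibre
  have hinv : (fderiv 𝕜 f 0 ∘L .inr 𝕜 𝕜 (Fin n → 𝕜)).IsInvertible := by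
    obtain ⟨hJ⟩ := hF'.nonempty_invertible
    exact hf' ▸ ⟨(J.toLinearEquiv' hJ).toContinuousLinearEquiv, rfl⟩
  obtain ⟨γ, hγ, hγ0, hγf⟩ := exists_analyticAt_implicitFunction hf hinv
  exact ⟨γ, hγ, hγ0, hγf.mono fun x hx i => congrFun (hx.trans hf0) i⟩

theorem exists_X_pow_dvd_restrictGraph_sub {γ : 𝕜 → Fin n → 𝕜} (hγ : AnalyticAt 𝕜 γ 0)
    (hγ0 : γ 0 = 0) {N : ℕ} (hN : N ≠ 0) :
    ∃ φ : Fin n → Polynomial 𝕜, (∀ i, (φ i).eval 0 = 0) ∧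
      ∀ (f : MvPolynomial (Fin (n + 1)) 𝕜) (P : Polynomial 𝕜),
        ((fun x => eval (Fin.cons x (γ x)) f - P.eval x) =O[𝓝 0] fun x => x ^ N) →
          Polynomial.X ^ N ∣ restrictGraph φ f - P := by
  choose φ hφ using fun i => exists_polynomial_isBigO_sub (analyticAt_pi_iff.1 hγ i) N
  have hφ0 (i : Fin n) : (φ i).eval 0 = 0 := by
    simpa [hγ0, hN] using (hφ i).eq_zero_imp.self_of_nhds
  refine ⟨φ, hφ0, fun f P hP => X_pow_dvd_of_eval_isBigO ?_⟩
  have hφcont : ContinuousAt (fun x i => (φ i).eval x) 0 :=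
    continuousAt_pi.2 fun i => (φ i).continuous.continuousAt
  have hclose := (isBigO_eval_cons_sub hγ.continuousAt hφcont (by ext; simp [hγ0, hφ0]) f).trans
    (isBigO_pi.2 hφ)
  refine (hP.sub hclose).congr_left fun x => ?_
  rw [Polynomial.eval_sub, eval_restrictGraph]
  ring

theorem exists_critical_curve [CompleteSpace 𝕜] [NeZero (2 : 𝕜)]
    {g r : MvPolynomial (Fin (n + 1)) 𝕜}
    (hg : g = ∑ i : Fin n, X i.succ ^ 2 + r) (hr : X 0 ∣ r) :
    ∃ γ : 𝕜 → Fin n → 𝕜, AnalyticAt 𝕜 γ 0 ∧ γ 0 = 0 ∧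
      ∀ᶠ x in 𝓝 0, ∀ i : Fin n, eval (Fin.cons x (γ x)) (pderiv i.succ g) = 0 := by
  have hpderiv₁ (i : Fin n) : X 0 ∣ pderiv i.succ r := X_dvd_pderiv_of_ne i.succ_ne_zero hr
  have hpderiv₂ (i j : Fin n) : X 0 ∣ pderiv j.succ (pderiv i.succ r) :=
    X_dvd_pderiv_of_ne j.succ_ne_zero (hpderiv₁ i)
  have hg' (i : Fin n) : pderiv i.succ g = C 2 * X i.succ + pderiv i.succ r := by
    rw [hg, map_add, pderiv_succ_sum_X_sq]
  have hessian : (Matrix.of fun i j : Fin n => eval 0 (pderiv j.succ (pderiv i.succ g))) =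
      Matrix.scalar (Fin n) (2 : 𝕜) := by
    ext i j
    simp [hg', constantCoeff_eq_zero_of_X_dvd (hpderiv₂ i j), Derivation.leibniz, pderiv_X,
      Pi.single_apply, Matrix.diagonal_apply, apply_ite constantCoeff]
  refine exists_analyticAt_eval_cons_eq_zero (fun i => ?_) ?_
  · simp [hg', constantCoeff_eq_zero_of_X_dvd (hpderiv₁ i)]
  · rw [hessian]
    exact (NeZero.ne (2 : 𝕜)).isUnit.map (Matrix.scalar (Fin n))

theorem newton_principal_part_at_A1_point_general [CompleteSpace 𝕜] [NeZero (2 : 𝕜)]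
    (g r : MvPolynomial (Fin (n + 1)) 𝕜)
    (hg : g = ∑ i : Fin n, X i.succ ^ 2 + r)
    (hr : ∀ m ∈ r.support, 1 ≤ m 0)
    (hiso : ∀ᶠ z in 𝓝 (0 : Fin (n + 1) → 𝕜),
      (eval z g = 0 ∧ ∀ i, eval z (pderiv i g) = 0) → z = 0) :
    ∃ (ℓ : ℕ) (c : 𝕜) (p : Fin n → Polynomial 𝕜) (R : MvPolynomial (Fin (n + 1)) 𝕜),
      1 ≤ ℓ ∧ c ≠ 0 ∧ (∀ i, (p i).eval 0 = 0) ∧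
      shear p g = ∑ i : Fin n, X i.succ ^ 2 + C c * X 0 ^ ℓ + R ∧
      ∀ m ∈ R.support, 1 ≤ m 0 ∧ 2 * ℓ < 2 * m 0 + ℓ * ∑ i : Fin n, m i.succ := by
  have hXr : X 0 ∣ r := X_dvd_iff_forall_mem_support.2 hr
  obtain ⟨γ, hγ, hγ0, hcrit⟩ := exists_critical_curve hg hXr
  have hdiff := hγ.eventually_analyticAt.mono fun _ h => h.differentiableAt
  obtain ⟨ℓ, c, hc, hlead⟩ := exists_isBigO_sub_const_mul_pow (analyticAt_eval_cons hγ g)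
    (not_eventually_eval_cons_eq_zero hiso hdiff hγ0 hcrit)
  have hℓ : ℓ ≠ 0 := by
    rintro rfl
    have hg0 : eval (Fin.cons 0 (γ 0)) g = 0 := by
      have horigin : (Fin.cons 0 (γ 0) : Fin (n + 1) → 𝕜) = 0 := hγ0 ▸ Matrix.cons_zero_zero
      simp [horigin, hg, constantCoeff_eq_zero_of_X_dvd hXr]
    exact hc (by simpa [hg0] using hlead.eq_zero_imp.self_of_nhds)
  obtain ⟨φ, hφ0, hφ⟩ := exists_X_pow_dvd_restrictGraph_sub hγ hγ0 ℓ.succ_ne_zero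
  have hφg : Polynomial.X ^ (ℓ + 1) ∣ restrictGraph φ g - Polynomial.C c * Polynomial.X ^ ℓ :=
    hφ g _ (by simpa using hlead)
  have hφg' (i : Fin n) : Polynomial.X ^ (ℓ + 1) ∣ restrictGraph φ (pderiv i.succ g) := by
    simpa using hφ (pderiv i.succ g) 0 (.of_bound 0 (hcrit.mono fun x hx => by simp [hx]))
  exact ⟨ℓ, c, -φ, _, Nat.one_le_iff_ne_zero.2 hℓ, hc, by simpa using hφ0,
    (add_sub_cancel _ _).symm, two_mul_lt_of_X_pow_dvd_restrictGraph_sub hg hXr hℓ hφ0 hφg hφg'⟩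

end Analysis

/-- Polynomial form of Lemma 4.1: at an `A₁`-point, if
`g = x₂² + x₃² + r` (every monomial of `r` involving `x₁`) has an isolated
critical zero at the origin, then after an admissible coordinate change
`x₂ ↦ x₂ + p(x₁)`, `x₃ ↦ x₃ + q(x₁)` the polynomial takes the form
`x₂² + x₃² + c·x₁^ℓ + R`, where every monomial of `R` lies strictly above the
Newton boundary of `x₂² + x₃² + c·x₁^ℓ`. -/
theorem newton_principal_part_at_A1_point (g r : MvPolynomial (Fin 3) ℂ)
    (hg : g = X 1 ^ 2 + X 2 ^ 2 + r)
    (hr : ∀ mo ∈ r.support, 1 ≤ mo 0)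
    (hiso : ∃ U ∈ nhds (0 : Fin 3 → ℂ),
      ∀ z ∈ U, (eval z g = 0 ∧ ∀ i : Fin 3, eval z (pderiv i g) = 0) → z = 0) :
    ∃ (ℓ : ℕ) (c : ℂ) (p q : Polynomial ℂ) (R : MvPolynomial (Fin 3) ℂ),
      1 ≤ ℓ ∧ c ≠ 0 ∧ p.eval 0 = 0 ∧ q.eval 0 = 0 ∧
      aeval
          ![X 0,
            X 1 - Polynomial.aeval (X 0 : MvPolynomial (Fin 3) ℂ) p,
            X 2 - Polynomial.aeval (X 0 : MvPolynomial (Fin 3) ℂ) q] g =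
        X 1 ^ 2 + X 2 ^ 2 + C c * X 0 ^ ℓ + R ∧
      ∀ mo ∈ R.support, 1 ≤ mo 0 ∧ 2 * ℓ < 2 * mo 0 + ℓ * (mo 1 + mo 2) := by
  obtain ⟨ℓ, c, p, R, hℓ, hc, hp, hshear, hR⟩ :=
    newton_principal_part_at_A1_point_general g r (by simpa [Fin.sum_univ_two] using hg) hr
      (Filter.eventually_iff_exists_mem.2 hiso)
  refine ⟨ℓ, c, p 0, p 1, R, hℓ, hc, hp 0, hp 1, ?_, by simpa [Fin.sum_univ_two] using hR⟩
  have hcoords : (Fin.cons (X 0) fun i => X i.succ - Polynomial.aeval (X 0) (p i) :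
      Fin 3 → MvPolynomial (Fin 3) ℂ) =
      ![X 0, X 1 - Polynomial.aeval (X 0) (p 0), X 2 - Polynomial.aeval (X 0) (p 1)] := by
    ext1 i
    fin_cases i <;> rfl
  simpa [shear, hcoords, Fin.sum_univ_two] using hshear
end

section
/- Let g ∈ MvPolynomial (Fin 3) ℂ, with variables X₁,X₂,X₃, be of the form g = X₂² + X₃² + r, where every exponent vector in the support of r has positive X₁-exponent. Let J ≥ 1 be an integer and assume: (i) for every integer j with 1 ≤ j ≤ 2J, the exponent vector (j,0,0) is not in the support of g (no pure power X₁^j occurs); (ii) for every integer j with 1 ≤ j < J, neither (j,1,0) nor (j,0,1) is in the support of g (no monomial X₁^j X₂ or X₁^j X₃ occurs). Assume moreover that the local Milnor algebra of g at the origin — the localization of MvPolynomial (Fin 3) ℂ / J(g) at the maximal ideal (X₁,X₂,X₃) — is finite-dimensional over ℂ. Then its dimension μ₀(g) satisfies μ₀(g) ≥ 2J − 1. (Claim 4.5 of the paper, proved via the deformation g + τX₁^{2J}, Kouchnirenko's theorem, and upper-semicontinuity of the Milnor number.) -/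
open MvPolynomial

/-- The Jacobian ideal of `g`, generated by its partial derivatives. -/
noncomputable def jacobianIdeal (g : MvPolynomial (Fin 3) ℂ) :
    Ideal (MvPolynomial (Fin 3) ℂ) :=
  Ideal.span (Set.range fun i : Fin 3 => pderiv i g)

/-- The multiplicative set of polynomials with nonzero constant term, i.e. the
complement of the maximal ideal `(X₁, X₂, X₃)` of `ℂ[x₁,x₂,x₃]`. -/
noncomputable def constTermNeZero : Submonoid (MvPolynomial (Fin 3) ℂ) :=
  Submonoid.comap (constantCoeff : MvPolynomial (Fin 3) ℂ →+* ℂ).toMonoidHom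
    (nonZeroDivisors ℂ)

/-- The local Milnor algebra of `g` at the origin: the localization of the Milnor
algebra `ℂ[x₁,x₂,x₃]/J(g)` at the maximal ideal `(X₁,X₂,X₃)`, realized as the
quotient of the local ring `ℂ[x₁,x₂,x₃]_{(X₁,X₂,X₃)}` by the extension of the
Jacobian ideal. -/
noncomputable abbrev LocalMilnorAlgebra (g : MvPolynomial (Fin 3) ℂ) :=
  Localization constTermNeZero ⧸
    (jacobianIdeal g).map
      (algebraMap (MvPolynomial (Fin 3) ℂ) (Localization constTermNeZero))

/-!
A critical point of `f` with coordinates in a local algebra `A` and reducing to the origin is the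
same as a local homomorphism from the local Milnor algebra to `A`. For `A = R[x] / (x ^ k)` such a
point is built by one Newton step from the axis point `(x, 0, …, 0)`: there the transverse partial
derivatives are multiples of `x ^ J`, and the transverse Hessian is invertible, so a correction of
the transverse coordinates by multiples of `x ^ J` makes these derivatives vanish exactly, all
second-order terms being multiples of `x ^ (2 * J) = 0`. The derivative along the axis is a multiple
of `x ^ k = 0` at the axis point, and the correction moves it only by multiples of
`x ^ J * x ^ (J - 1)`, which vanish as well when `k < 2 * J`. As the first coordinate `x` generates
`A`, the local Milnor algebra surjects onto `A`, which is free of rank `k`.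
-/

lemma exists_algHom_quotient_map_surjective {R P A : Type*} [CommRing R] [CommRing P]
    [CommRing A] [Algebra R P] [Algebra R A] {M : Submonoid P} (S : Type*) [CommRing S]
    [Algebra P S] [Algebra R S] [IsScalarTower R P S] [IsLocalization M S] {I : Ideal P}
    {φ : P →ₐ[R] A} (hM : ∀ s : M, IsUnit (φ s)) (hI : ∀ a ∈ I, φ a = 0)
    (hφ : Function.Surjective φ) :
    ∃ ψ : (S ⧸ I.map (algebraMap P S)) →ₐ[R] A, Function.Surjective ψ := by
  let φS : S →ₐ[R] A := IsLocalization.liftAlgHom hM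
  have hφS (a : P) : φS (algebraMap P S a) = φ a := IsLocalization.lift_eq hM a
  have map_le_ker : I.map (algebraMap P S) ≤ RingHom.ker φS :=
    Ideal.map_le_iff_le_comap.mpr fun a ha => (hφS a).trans (hI a ha)
  refine ⟨Ideal.Quotient.liftₐ _ φS map_le_ker, Ideal.Quotient.lift_surjective_of_surjective _
    map_le_ker fun t => ?_⟩
  obtain ⟨a, rfl⟩ := hφ t
  exact ⟨algebraMap P S a, hφS a⟩

lemma X_dvd_of_forall_mem_support_one_le {R σ : Type*} [CommSemiring R] {i : σ}
    {r : MvPolynomial σ R} (hr : ∀ m ∈ r.support, 1 ≤ m i) : X i ∣ r := by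
  rw [← Ideal.mem_span_singleton, ← Set.image_singleton, mem_ideal_span_X_image]
  exact fun m hm => ⟨i, rfl, Nat.one_le_iff_ne_zero.mp (hr m hm)⟩

section Evaluation

variable {R A σ : Type*} [CommRing R] [CommRing A] [Algebra R A]

lemma aeval_add_of_forall_mul_eq_zero [Fintype σ] (v h : σ → A) (hh : ∀ i j, h i * h j = 0)
    (f : MvPolynomial σ R) :
    aeval (v + h) f = aeval v f + ∑ i, h i * aeval v (pderiv i f) := by
  classical
  induction f using MvPolynomial.induction_on with
  | C a => simp
  | add p q hp hq =>
    simp only [map_add, hp, hq, mul_add, Finset.sum_add_distrib]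
    ring
  | mul_X p j hp =>
    have sum_pderiv_mul_X : ∑ i, h i * aeval v (pderiv i (p * X j)) =
        (∑ i, h i * aeval v (pderiv i p)) * v j + h j * aeval v p := by
      simp only [pderiv_mul, pderiv_X, Pi.single_apply, map_add, map_mul, aeval_X, mul_add,
        Finset.sum_add_distrib, Finset.sum_mul, mul_assoc]
      simp
    have second_order : (∑ i, h i * aeval v (pderiv i p)) * h j = 0 := by
      rw [Finset.sum_mul]
      exact Finset.sum_eq_zero fun i _ => by rw [mul_right_comm, hh, zero_mul]
    rw [sum_pderiv_mul_X, map_mul, map_mul, hp, aeval_X, aeval_X, Pi.add_apply]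
    linear_combination second_order

lemma isNilpotent_aeval_sub_algebraMap_constantCoeff {v : σ → A} (hv : ∀ i, IsNilpotent (v i))
    (f : MvPolynomial σ R) :
    IsNilpotent (aeval v f - algebraMap R A (constantCoeff f)) := by
  induction f using MvPolynomial.induction_on with
  | C a => simp
  | add p q hp hq =>
    simpa only [map_add, add_sub_add_comm] using (Commute.all _ _).isNilpotent_add hp hq
  | mul_X p i _ =>
    simpa using (Commute.all _ _).isNilpotent_mul_left (hv i)

lemma isUnit_aeval_of_isUnit_constantCoeff {v : σ → A} (hv : ∀ i, IsNilpotent (v i))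
    {f : MvPolynomial σ R} (hf : IsUnit (constantCoeff f)) : IsUnit (aeval v f) := by
  simpa using (isNilpotent_aeval_sub_algebraMap_constantCoeff hv f).isUnit_add_left_of_commute
    (hf.map (algebraMap R A)) (Commute.all _ _)

lemma pow_dvd_aeval_single [DecidableEq σ] (x : A) (i : σ) {k : ℕ} {f : MvPolynomial σ R}
    (hf : ∀ j < k, coeff (Finsupp.single i j) f = 0) :
    x ^ k ∣ aeval (Pi.single i x) f := by
  rw [f.as_sum, map_sum]
  refine Finset.dvd_sum fun d hd => ?_
  rw [aeval_monomial]
  refine Dvd.dvd.mul_left ?_ _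
  by_cases hoff : ∃ l ∈ d.support, l ≠ i
  · obtain ⟨l, hl, hli⟩ := hoff
    have factor_eq_zero : (Pi.single i x : σ → A) l ^ d l = 0 := by
      rw [Pi.single_eq_of_ne hli, zero_pow (Finsupp.mem_support_iff.mp hl)]
    rw [Finsupp.prod, Finset.prod_eq_zero hl factor_eq_zero]
    exact dvd_zero _
  · push Not at hoff
    obtain ⟨m, rfl⟩ : ∃ m, d = Finsupp.single i m :=
      ⟨d i, Finsupp.support_subset_singleton.mp fun l hl => Finset.mem_singleton.mpr (hoff l hl)⟩
    have hkm : k ≤ m := not_lt.mp fun hlt => mem_support_iff.mp hd (hf m hlt)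
    simpa using pow_dvd_pow x hkm

end Evaluation

lemma aeval_surjective_of_eq_root {R : Type*} [CommRing R] {p : Polynomial R} {σ : Type*}
    {v : σ → AdjoinRoot p} {i : σ} (hi : v i = AdjoinRoot.root p) :
    Function.Surjective (aeval v : MvPolynomial σ R →ₐ[R] AdjoinRoot p) := by
  rw [← AlgHom.range_eq_top, ← Algebra.adjoin_range_eq_range_aeval, eq_top_iff,
    ← AdjoinRoot.adjoinRoot_eq_top]
  exact Algebra.adjoin_mono (Set.singleton_subset_iff.mpr ⟨i, hi⟩)

section CriticalPoint

variable {R A : Type*} [CommRing R] [CommRing A] [Algebra R A] {n : ℕ}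

lemma exists_aeval_add_eq_zero_of_isUnit_det (v : Fin (n + 1) → A) {c : A}
    (hc : c * c = 0) (p : Fin n → MvPolynomial (Fin (n + 1)) R) (hp : ∀ i, c ∣ aeval v (p i))
    (hdet : IsUnit (Matrix.of fun i j => aeval v (pderiv (Fin.succ j) (p i))).det) :
    ∃ h : Fin (n + 1) → A, h 0 = 0 ∧ (∀ i, c ∣ h i) ∧ ∀ i, aeval (v + h) (p i) = 0 := by
  choose a ha using hp
  set D : Matrix (Fin n) (Fin n) A := Matrix.of fun i j => aeval v (pderiv (Fin.succ j) (p i))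
    with hD
  let b : Fin n → A := D⁻¹.mulVec a
  have hDb : D.mulVec b = a := by
    rw [Matrix.mulVec_mulVec, Matrix.mul_nonsing_inv D hdet, Matrix.one_mulVec]
  let h : Fin (n + 1) → A := Fin.cons 0 fun j => -(c * b j)
  have dvd_h : ∀ i, c ∣ h i :=
    Fin.cases (dvd_zero c) fun j => (dvd_mul_right c (b j)).neg_right
  have linear_part (i : Fin n) : ∑ j, h j * aeval v (pderiv j (p i)) = -(c * a i) := by
    rw [Fin.sum_univ_succ, ← congrFun hDb i, Matrix.mulVec, dotProduct, Finset.mul_sum,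
      ← Finset.sum_neg_distrib]
    simp only [h, Fin.cons_zero, Fin.cons_succ, zero_mul, zero_add, hD, Matrix.of_apply]
    exact Finset.sum_congr rfl fun j _ => by ring
  refine ⟨h, rfl, dvd_h, fun i => ?_⟩
  rw [aeval_add_of_forall_mul_eq_zero v h (fun i j => zero_dvd_iff.mp
    (hc ▸ mul_dvd_mul (dvd_h i) (dvd_h j))), linear_part, ha, add_neg_cancel]

/-- The Hessian matrix of `f` with respect to all variables but `X 0`, i.e. the Hessian of the
restriction of `f` to the slices transverse to the `X 0`-axis. -/
noncomputable def transverseHessian (f : MvPolynomial (Fin (n + 1)) R) :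
    Matrix (Fin n) (Fin n) (MvPolynomial (Fin (n + 1)) R) :=
  Matrix.of fun i j => pderiv j.succ (pderiv i.succ f)

lemma isUnit_det_aeval_transverseHessian {v : Fin (n + 1) → A} (hv : ∀ i, IsNilpotent (v i))
    {f : MvPolynomial (Fin (n + 1)) R} (hf : IsUnit (constantCoeff (transverseHessian f).det)) :
    IsUnit ((transverseHessian f).map (aeval v)).det := by
  have hdet := isUnit_aeval_of_isUnit_constantCoeff hv hf
  rwa [AlgHom.map_det] at hdet

lemma exists_isNilpotent_forall_aeval_pderiv_eq_zero {f : MvPolynomial (Fin (n + 1)) R} {k J : ℕ}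
    (hkJ : k < 2 * J) (hpure : ∀ j < k, coeff (Finsupp.single 0 (j + 1)) f = 0)
    (hmixed : ∀ i : Fin n, ∀ j < J,
      coeff (Finsupp.single 0 j + Finsupp.single i.succ 1) f = 0)
    (hhess : IsUnit (constantCoeff (transverseHessian f).det)) {x : A} (hx : x ^ k = 0) :
    ∃ v : Fin (n + 1) → A, v 0 = x ∧ (∀ i, IsNilpotent (v i)) ∧
      ∀ i, aeval v (pderiv i f) = 0 := by
  let v : Fin (n + 1) → A := Pi.single 0 x
  have hv : ∀ i, IsNilpotent (v i) :=
    Fin.cases ⟨k, by simpa [v] using hx⟩ fun i => by simp [v]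
  have hxJ : x ^ J * x ^ J = 0 := by
    rw [← pow_add]
    exact pow_eq_zero_of_le (by omega) hx
  have transverse_dvd (i : Fin n) : x ^ J ∣ aeval v (pderiv i.succ f) :=
    pow_dvd_aeval_single x 0 fun j hj => by rw [coeff_pderiv, hmixed i j hj, zero_mul]
  have axial_eq_zero : aeval v (pderiv 0 f) = 0 :=
    zero_dvd_iff.mp <| hx ▸ pow_dvd_aeval_single x 0 fun j hj => by
      rw [coeff_pderiv, ← Finsupp.single_add, hpure j hj, zero_mul]
  have axial_transverse_dvd (i : Fin n) :
      x ^ (J - 1) ∣ aeval v (pderiv i.succ (pderiv 0 f)) :=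
    pow_dvd_aeval_single x 0 fun j hj => by
      rw [coeff_pderiv, coeff_pderiv, add_right_comm, ← Finsupp.single_add,
        hmixed i (j + 1) (by omega), zero_mul, zero_mul]
  obtain ⟨h, h_zero, dvd_h, transverse_eq_zero⟩ := exists_aeval_add_eq_zero_of_isUnit_det v
    hxJ (fun i => pderiv i.succ f) transverse_dvd (isUnit_det_aeval_transverseHessian hv hhess)
  have square_zero (i j : Fin (n + 1)) : h i * h j = 0 :=
    zero_dvd_iff.mp (hxJ ▸ mul_dvd_mul (dvd_h i) (dvd_h j))
  have axial_change_eq_zero : ∀ i, h i * aeval v (pderiv i (pderiv 0 f)) = 0 := by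
    refine Fin.cases (by rw [h_zero, zero_mul]) fun i => ?_
    have hdvd := mul_dvd_mul (dvd_h i.succ) (axial_transverse_dvd i)
    rwa [← pow_add, pow_eq_zero_of_le (by omega) hx, zero_dvd_iff] at hdvd
  refine ⟨v + h, by simp [v, h_zero], fun i => ?_, Fin.cases ?_ transverse_eq_zero⟩
  · exact (Commute.all _ _).isNilpotent_add (hv i) ⟨2, (sq _).trans (square_zero i i)⟩
  · rw [aeval_add_of_forall_mul_eq_zero v h square_zero, axial_eq_zero,
      Finset.sum_eq_zero fun i _ => axial_change_eq_zero i, zero_add]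

end CriticalPoint

theorem local_milnor_number_lower_bound_general {R : Type*} [CommRing R] [Nontrivial R] {n : ℕ}
    {f : MvPolynomial (Fin (n + 1)) R} {k J : ℕ} (hkJ : k < 2 * J)
    (hpure : ∀ j < k, coeff (Finsupp.single 0 (j + 1)) f = 0)
    (hmixed : ∀ i : Fin n, ∀ j < J,
      coeff (Finsupp.single 0 j + Finsupp.single i.succ 1) f = 0)
    (hhess : IsUnit (constantCoeff (transverseHessian f).det))
    {M : Submonoid (MvPolynomial (Fin (n + 1)) R)} (hM : ∀ s ∈ M, IsUnit (constantCoeff s))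
    (S : Type*) [CommRing S] [Algebra (MvPolynomial (Fin (n + 1)) R) S] [Algebra R S]
    [IsScalarTower R (MvPolynomial (Fin (n + 1)) R) S] [IsLocalization M S]
    (hfin : Module.Finite R (S ⧸ (Ideal.span (Set.range fun i => pderiv i f)).map
      (algebraMap (MvPolynomial (Fin (n + 1)) R) S))) :
    k ≤ Module.finrank R (S ⧸ (Ideal.span (Set.range fun i => pderiv i f)).map
      (algebraMap (MvPolynomial (Fin (n + 1)) R) S)) := by
  let A := AdjoinRoot (Polynomial.X ^ k : Polynomial R)
  have root_pow : (AdjoinRoot.root _ : A) ^ k = 0 := by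
    simpa using AdjoinRoot.eval₂_root (Polynomial.X ^ k : Polynomial R)
  obtain ⟨v, hv0, hv, hcrit⟩ :=
    exists_isNilpotent_forall_aeval_pderiv_eq_zero hkJ hpure hmixed hhess root_pow
  have jacobian_le_ker : Ideal.span (Set.range fun i => pderiv i f) ≤
      RingHom.ker (aeval v : MvPolynomial (Fin (n + 1)) R →ₐ[R] A) :=
    Ideal.span_le.mpr (Set.range_subset_iff.mpr hcrit)
  obtain ⟨ψ, hψ⟩ := exists_algHom_quotient_map_surjective S
    (fun s : M => isUnit_aeval_of_isUnit_constantCoeff hv (hM s s.2)) jacobian_le_ker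
    (aeval_surjective_of_eq_root hv0)
  calc
    k = (Polynomial.X ^ k : Polynomial R).natDegree := (Polynomial.natDegree_X_pow k).symm
    _ = Module.finrank R A :=
      (finrank_quotient_span_eq_natDegree' (Polynomial.monic_X_pow k)).symm
    _ ≤ _ := LinearMap.finrank_le_finrank_of_surjective (f := ψ.toLinearMap) hψ

section SumSq

variable {R : Type*} [CommRing R] {n : ℕ} (s : MvPolynomial (Fin (n + 1)) R)

lemma pderiv_succ_sum_sq_add_X_zero_mul (i : Fin n) :
    pderiv i.succ (∑ l : Fin n, X l.succ ^ 2 + X 0 * s) =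
      2 * X i.succ + X 0 * pderiv i.succ s := by
  simp [pderiv_X, Pi.single_apply, (Fin.succ_ne_zero i).symm]

lemma coeff_single_succ_one_sum_sq_add_X_zero_mul (i : Fin n) :
    coeff (Finsupp.single i.succ 1) (∑ l : Fin n, X l.succ ^ 2 + X 0 * s) = 0 := by
  have h := coeff_pderiv (i := i.succ) (∑ l : Fin n, X l.succ ^ 2 + X 0 * s) 0
  rw [pderiv_succ_sum_sq_add_X_zero_mul, ← constantCoeff_eq] at h
  simpa using h.symm

lemma constantCoeff_det_transverseHessian_sum_sq_add_X_zero_mul :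
    constantCoeff (transverseHessian (∑ l : Fin n, X l.succ ^ 2 + X 0 * s)).det = 2 ^ n := by
  have hessian_at_zero :
      (transverseHessian (∑ l : Fin n, X l.succ ^ 2 + X 0 * s)).map constantCoeff =
        Matrix.diagonal fun _ => 2 := by
    ext i j
    simp only [transverseHessian, Matrix.map_apply, Matrix.of_apply,
      pderiv_succ_sum_sq_add_X_zero_mul]
    rcases eq_or_ne i j with rfl | hij
    · simpa using map_ofNat constantCoeff 2
    · simp [hij]
  rw [RingHom.map_det, RingHom.mapMatrix_apply, hessian_at_zero]
  simp

end SumSq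

/-- Claim 4.5: if `g = x₂² + x₃² + r` (every monomial of `r` involving `x₁`)
contains no pure power `x₁^j` for `1 ≤ j ≤ 2J` and no monomial `x₁^j x₂`,
`x₁^j x₃` for `1 ≤ j < J`, then its local Milnor number at the origin satisfies
`μ₀(g) ≥ 2J - 1`. -/
theorem local_milnor_number_lower_bound (g r : MvPolynomial (Fin 3) ℂ)
    (hg : g = X 1 ^ 2 + X 2 ^ 2 + r)
    (hr : ∀ mo ∈ r.support, 1 ≤ mo 0)
    (J : ℕ) (hJ : 1 ≤ J)
    (hpure : ∀ j : ℕ, 1 ≤ j → j ≤ 2 * J →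
      coeff (Finsupp.single (0 : Fin 3) j) g = 0)
    (hmixed : ∀ j : ℕ, 1 ≤ j → j < J →
      coeff (Finsupp.single (0 : Fin 3) j + Finsupp.single (1 : Fin 3) 1) g = 0 ∧
      coeff (Finsupp.single (0 : Fin 3) j + Finsupp.single (2 : Fin 3) 1) g = 0)
    (hfin : FiniteDimensional ℂ (LocalMilnorAlgebra g)) :
    2 * J - 1 ≤ Module.finrank ℂ (LocalMilnorAlgebra g) := by
  obtain ⟨s, rfl⟩ : X 0 ∣ r := X_dvd_of_forall_mem_support_one_le hr
  have hg_sum : g = ∑ l : Fin 2, X l.succ ^ 2 + X 0 * s := by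
    rw [hg, Fin.sum_univ_two, Fin.succ_zero_eq_one, Fin.succ_one_eq_two]
  have hmixed_all (i : Fin 2) (j : ℕ) (hj : j < J) :
      coeff (Finsupp.single 0 j + Finsupp.single i.succ 1) g = 0 := by
    rcases Nat.eq_zero_or_pos j with rfl | hj_pos
    · rw [Finsupp.single_zero, zero_add, hg_sum, coeff_single_succ_one_sum_sq_add_X_zero_mul]
    · fin_cases i
      exacts [(hmixed j hj_pos hj).1, (hmixed j hj_pos hj).2]
  have hhess : IsUnit (constantCoeff (transverseHessian g).det) := by
    rw [hg_sum, constantCoeff_det_transverseHessian_sum_sq_add_X_zero_mul]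
    exact (IsUnit.mk0 2 two_ne_zero).pow 2
  exact local_milnor_number_lower_bound_general (by omega)
    (fun j hj => hpure (j + 1) (by omega) (by omega)) hmixed_all hhess
    (M := constTermNeZero) (fun _ hp => IsUnit.mk0 _ (nonZeroDivisors.ne_zero hp))
    (Localization constTermNeZero) hfin
end
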